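/- arXiv:1802.00622 — 6 statements merged into one kernel-verified Lean document; each statement's English description precedes it below -/
import Mathlib

section
/- Let V be a finite type and G a simple graph on V which is a tree (connected and acyclic). Let f, g : V → V → ℕ be functions such that f v w = 0 and g v w = 0 whenever v and w are not adjacent in G. Suppose that (i) f v w + f w v = g v w + g w v for all v, w ∈ V, and (ii) ∑_{w} f v w = ∑_{w} g v w for every v ∈ V. Then f = g. -/
/-!
The difference `h v w = f v w - g v w` is an antisymmetric function on ordered pairs, supported on
edges, with zero net outflow at every vertex: a circulation. The net outflow of a circulation across
any vertex cut vanishes, since the contributions of pairs inside the cut cancel by antisymmetry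
(`sum_sum_compl_eq_zero`). Every edge `xy` of a tree is a bridge, so the component of `x` after
deleting `xy` is a cut crossed by no other edge, and hence `h x y = 0`.
-/

/-- The net flow of a circulation from `S` to its complement is zero. -/
lemma sum_sum_compl_eq_zero {V : Type*} [Fintype V] [DecidableEq V] (h : V → V → ℤ)
    (hanti : ∀ v w, h v w = -h w v) (hdiv : ∀ v, ∑ w, h v w = 0) (S : Finset V) :
    ∑ v ∈ S, ∑ w ∈ Sᶜ, h v w = 0 := by
  have inner : ∑ v ∈ S, ∑ w ∈ S, h v w = 0 := by
    have key : ∑ v ∈ S, ∑ w ∈ S, h v w = -∑ v ∈ S, ∑ w ∈ S, h v w := by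
      conv_lhs => rw [Finset.sum_comm]
      simp only [← Finset.sum_neg_distrib]
      exact Finset.sum_congr rfl fun v _ => Finset.sum_congr rfl fun w _ => hanti w v
    linarith
  have total : ∑ v ∈ S, (∑ w ∈ S, h v w + ∑ w ∈ Sᶜ, h v w) = 0 :=
    Finset.sum_eq_zero fun v _ => by rw [Finset.sum_add_sum_compl, hdiv]
  rwa [Finset.sum_add_distrib, inner, zero_add] at total

/-- Reconstruction lemma on a tree (inner facets): two ℕ-valued functions on
ordered pairs of adjacent vertices of a tree that have the same symmetrized
values on every edge and the same outflow sum at every vertex are equal. -/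
theorem tree_edge_function_reconstruction {V : Type*} [Fintype V]
    (G : SimpleGraph V) (hG : G.IsTree)
    (f g : V → V → ℕ)
    (hf : ∀ v w, ¬ G.Adj v w → f v w = 0)
    (hg : ∀ v w, ¬ G.Adj v w → g v w = 0)
    (hedge : ∀ v w, f v w + f w v = g v w + g w v)
    (hvertex : ∀ v, ∑ w : V, f v w = ∑ w : V, g v w) :
    f = g := by
  classical
  funext x y
  by_cases hxy : G.Adj x y
  swap
  · rw [hf x y hxy, hg x y hxy]
  have hbridge : ¬ (G.deleteEdges {s(x, y)}).Reachable x y :=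
    SimpleGraph.isBridge_iff.mp
      (SimpleGraph.isAcyclic_iff_forall_adj_isBridge.mp hG.isAcyclic hxy)
  let S : Finset V := {v | (G.deleteEdges {s(x, y)}).Reachable x v}
  have hxS : x ∈ S := by simp [S]
  have hyS : y ∈ Sᶜ := by simpa [S] using hbridge
  have hcross : ∀ v ∈ S, ∀ w ∈ Sᶜ, G.Adj v w → v = x ∧ w = y := by
    intro v hv w hw hvw
    have hvS : (G.deleteEdges {s(x, y)}).Reachable x v := by simpa [S] using hv
    have hwS : ¬ (G.deleteEdges {s(x, y)}).Reachable x w := by simpa [S] using hw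
    have he : s(v, w) = s(x, y) := by
      by_contra hne
      refine hwS (hvS.trans (SimpleGraph.Adj.reachable ?_))
      rw [SimpleGraph.deleteEdges_adj]
      exact ⟨hvw, hne⟩
    rcases Sym2.eq_iff.mp he with h | ⟨rfl, rfl⟩
    · exact h
    · exact absurd hvS hbridge
  have hcut := sum_sum_compl_eq_zero (fun v w => (f v w : ℤ) - g v w)
    (fun v w => by have := hedge v w; omega)
    (fun v => by
      rw [Finset.sum_sub_distrib, sub_eq_zero]
      exact_mod_cast hvertex v) S
  have hzero : ∀ v ∈ S, ∀ w ∈ Sᶜ, ¬ (v = x ∧ w = y) → (f v w : ℤ) - g v w = 0 := by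
    intro v hv w hw hne
    have hvw : ¬ G.Adj v w := fun h => hne (hcross v hv w hw h)
    simp [hf v w hvw, hg v w hvw]
  rw [Finset.sum_eq_single_of_mem x hxS fun v hv hne =>
      Finset.sum_eq_zero fun w hw => hzero v hv w hw fun h => hne h.1,
    Finset.sum_eq_single_of_mem y hyS fun w hw hne => hzero x hxS w hw fun h => hne h.2] at hcut
  omega
end

section
/- Let V be a finite type and G a simple graph on V which is a tree (connected and acyclic), equipped with an orientation o : V → V → Prop (so o v w implies that v and w are adjacent in G, and for every pair of adjacent vertices v, w exactly one of o v w and o w v holds). Let a, a' : V → ℕ and let f, f' : V → V → ℕ satisfy f v w = 0 and f' v w = 0 whenever o v w fails. Suppose for every vertex v: a v + ∑_{w} f v w = a' v + ∑_{w} f' v w and a v + ∑_{w} f w v = a' v + ∑_{w} f' w v. Then a = a' and f = f'. -/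
/-!
Passing to differences over `ℤ`, the hypotheses say that `f - f'` has equal outflow and inflow at
every vertex, both equal to `a' v - a v`. Its antisymmetrization `g v w = (f - f') v w - (f - f') w v`
is therefore a circulation on `G`: antisymmetric, supported on edges, with zero divergence.

A circulation on an acyclic graph vanishes (`circulation_eq_zero_of_isAcyclic`): each edge `vw` is a
bridge, and the net flow out of the side of the bridge containing `v` is zero, but it is also
`g v w`, since `vw` is the only edge crossing the cut. As each edge carries only one direction of
the orientation, `g = 0` forces `f = f'`, and then `a = a'`.
-/

/-- The net flow of an antisymmetric function out of a vertex set is carried by the pairs leaving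
the set, because the pairs inside it cancel. -/
lemma sum_divergence_eq_cut {V : Type*} [Fintype V] [DecidableEq V] (g : V → V → ℤ)
    (hanti : ∀ v w, g v w = - g w v) (S : Finset V) :
    ∑ x ∈ S, ∑ y, g x y = ∑ x ∈ S, ∑ y ∈ Sᶜ, g x y := by
  have hinside : ∑ x ∈ S, ∑ y ∈ S, g x y = 0 := by
    have h : ∑ x ∈ S, ∑ y ∈ S, g x y = - ∑ x ∈ S, ∑ y ∈ S, g x y := by
      conv_lhs => rw [Finset.sum_comm]
      simp_rw [← Finset.sum_neg_distrib]
      exact Finset.sum_congr rfl fun x _ => Finset.sum_congr rfl fun y _ => hanti y x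
    omega
  simp_rw [← Finset.sum_add_sum_compl S, Finset.sum_add_distrib, hinside, zero_add]

lemma circulation_eq_zero_of_isAcyclic {V : Type*} [Fintype V] {G : SimpleGraph V}
    (hG : G.IsAcyclic) (g : V → V → ℤ) (hanti : ∀ v w, g v w = - g w v)
    (hsupp : ∀ v w, ¬ G.Adj v w → g v w = 0) (hdiv : ∀ v, ∑ w, g v w = 0) (v w : V) :
    g v w = 0 := by
  classical
  by_cases hvw : G.Adj v w
  · have hbridge := SimpleGraph.isBridge_iff.1 (SimpleGraph.isAcyclic_iff_forall_adj_isBridge.1 hG hvw)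
    set H := G.deleteEdges {s(v, w)} with hH
    -- The side of the bridge `vw` containing `v`.
    let S : Finset V := {x | H.Reachable v x}
    have hv : v ∈ S := by simp [S]
    have hw : w ∈ Sᶜ := by simpa [S] using hbridge
    have hcut : ∀ x ∈ S, ∀ y ∈ Sᶜ, ¬ (x = v ∧ y = w) → g x y = 0 := by
      intro x hx y hy hne
      refine hsupp x y fun hxy => ?_
      simp only [S, Finset.mem_compl, Finset.mem_filter, Finset.mem_univ, true_and] at hx hy hw
      have hxy' : ¬ H.Adj x y := fun h => hy (hx.trans h.reachable)
      have : s(x, y) = s(v, w) := by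
        by_contra h
        exact hxy' (by simp [hH, hxy, h])
      rcases Sym2.eq_iff.1 this with h | ⟨rfl, rfl⟩
      · exact hne h
      · exact hw hx
    have hsum := sum_divergence_eq_cut g hanti S
    rw [Finset.sum_eq_zero fun x _ => hdiv x,
      Finset.sum_eq_single_of_mem v hv
        fun x hx hxv => Finset.sum_eq_zero fun y hy => hcut x hx y hy fun h => hxv h.1,
      Finset.sum_eq_single_of_mem w hw fun y hy hyw => hcut v hv y hy fun h => hyw h.2] at hsum
    exact hsum.symm
  · exact hsupp v w hvw

/-- Reconstruction lemma on an oriented tree (boundary facets): vertex weights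
`a` and edge numbers `f` supported on an orientation of a tree are determined
by the quantities `a v + (outflow of f at v)` and `a v + (inflow of f at v)`. -/
theorem oriented_tree_reconstruction {V : Type*} [Fintype V]
    (G : SimpleGraph V) (hG : G.IsTree)
    (o : V → V → Prop)
    (ho1 : ∀ v w, o v w → G.Adj v w)
    (ho2 : ∀ v w, G.Adj v w → Xor' (o v w) (o w v))
    (a a' : V → ℕ) (f f' : V → V → ℕ)
    (hf : ∀ v w, ¬ o v w → f v w = 0)
    (hf' : ∀ v w, ¬ o v w → f' v w = 0)
    (hout : ∀ v, a v + ∑ w : V, f v w = a' v + ∑ w : V, f' v w)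
    (hin : ∀ v, a v + ∑ w : V, f w v = a' v + ∑ w : V, f' w v) :
    a = a' ∧ f = f' := by
  have hg := circulation_eq_zero_of_isAcyclic hG.isAcyclic
    (fun v w => ((f v w : ℤ) - f' v w) - ((f w v : ℤ) - f' w v))
    (fun v w => by ring)
    (fun v w hvw => by
      have h1 : ¬ o v w := fun h => hvw (ho1 v w h)
      have h2 : ¬ o w v := fun h => hvw (ho1 w v h).symm
      simp [hf _ _ h1, hf _ _ h2, hf' _ _ h1, hf' _ _ h2])
    (fun v => by
      have h1 := hout v
      have h2 := hin v
      zify at h1 h2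
      simp only [Finset.sum_sub_distrib]
      linarith)
  have hff : f = f' := by
    funext v w
    by_cases h : o v w
    · have hwv : ¬ o w v := by
        rcases ho2 v w (ho1 v w h) with h' | h'
        · exact h'.2
        · exact absurd h h'.2
      have := hg v w
      simp only [hf _ _ hwv, hf' _ _ hwv] at this
      omega
    · rw [hf v w h, hf' v w h]
  subst hff
  exact ⟨funext fun v => Nat.add_right_cancel (hout v), rfl⟩
end

section
/- Let V be a finite type and G a simple graph on V which is a tree (connected and acyclic), equipped with an orientation o. Let k ≥ 1, and let (a, r) be a k-cell: a : V → ℕ and r : Fin k → V → V → ℕ with r j v w = 0 whenever o v w fails, and with ∑_{v,w} r j v w > 0 for every level j. Define the vertices c_0, …, c_k : V → ℕ of the cell by c_i v = a v + ∑_{j < i} ∑_{w} r j v w + ∑_{j ≥ i} ∑_{w} r j w v. Then the functions c_0, …, c_k are pairwise distinct. -/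
/-!
If two vertices `c_i`, `c_i'` of a cell with `i < i'` coincide, then the total flow
`f = ∑_{i ≤ j < i'} r j` has equal outflow and inflow at every vertex of the tree. A balanced flow
has no net flow across any cut. Every edge of a tree is a bridge, so for an edge oriented from `x`
to `y` the component of `x` after deletion of that edge defines a cut crossed by this edge alone;
the orientation forbids flow from `y` to `x`, hence `f x y = 0`. Thus `f = 0`, which contradicts
`r i ≠ 0`.
-/

/-- The `i`-th vertex of a `k`-cell `(a, r)` of the symmetric product of an
oriented graph: `c i v = a v + ∑_{j < i} (outflow of r j at v)
+ ∑_{j ≥ i} (inflow of r j at v)`. -/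
def cellVertex {V : Type*} [Fintype V] {k : ℕ} (a : V → ℕ)
    (r : Fin k → V → V → ℕ) (i : Fin (k + 1)) : V → ℕ :=
  fun v =>
    a v + (∑ j ∈ Finset.univ.filter (fun j : Fin k => (j : ℕ) < (i : ℕ)), ∑ w : V, r j v w)
      + ∑ j ∈ Finset.univ.filter (fun j : Fin k => (i : ℕ) ≤ (j : ℕ)), ∑ w : V, r j w v

/-- A balanced flow sends as much out of a set `S` as into it. -/
theorem balanced_cut {V : Type*} [Fintype V] [DecidableEq V] (f : V → V → ℕ)
    (hbal : ∀ v, ∑ w, f v w = ∑ w, f w v) (S : Finset V) :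
    ∑ v ∈ S, ∑ w ∈ Sᶜ, f v w = ∑ v ∈ S, ∑ w ∈ Sᶜ, f w v := by
  have h : ∑ v ∈ S, ∑ w, f v w = ∑ v ∈ S, ∑ w, f w v :=
    Finset.sum_congr rfl fun v _ => hbal v
  simp only [← Finset.sum_add_sum_compl S, Finset.sum_add_distrib] at h
  -- The flow internal to `S` is counted once on each side, so it cancels.
  rw [Finset.sum_comm (s := S) (t := S)] at h
  exact Nat.add_left_cancel h

theorem balanced_flow_eq_zero {V : Type*} [Fintype V] (G : SimpleGraph V)
    (hG : G.IsAcyclic) (o : V → V → Prop)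
    (ho1 : ∀ v w, o v w → G.Adj v w)
    (ho2 : ∀ v w, G.Adj v w → Xor' (o v w) (o w v))
    (f : V → V → ℕ) (hsupp : ∀ v w, ¬ o v w → f v w = 0)
    (hbal : ∀ v, ∑ w, f v w = ∑ w, f w v) (x y : V) : f x y = 0 := by
  classical
  by_cases hxy : o x y
  swap
  · exact hsupp x y hxy
  have hadj := ho1 x y hxy
  have hyx : ¬ o y x := by
    rcases ho2 x y hadj with h | h
    · exact h.2
    · exact absurd hxy h.2
  have hbr : ¬ (G.deleteEdges {s(x, y)}).Reachable x y :=
    SimpleGraph.isBridge_iff.1 (SimpleGraph.isAcyclic_iff_forall_adj_isBridge.1 hG hadj)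
  let S : Finset V := Finset.univ.filter fun v => (G.deleteEdges {s(x, y)}).Reachable x v
  have hS : ∀ v, v ∈ S ↔ (G.deleteEdges {s(x, y)}).Reachable x v := fun v => by simp [S]
  have hin : ∑ v ∈ S, ∑ w ∈ Sᶜ, f w v = 0 := by
    refine Finset.sum_eq_zero fun v hv => Finset.sum_eq_zero fun w hw => hsupp w v fun how => ?_
    rw [Finset.mem_compl, hS] at hw
    rw [hS] at hv
    -- An edge leaving `S` other than the deleted one would put its endpoint in `S`.
    have he : s(v, w) = s(x, y) := by
      by_contra hne
      refine hw (hv.trans (SimpleGraph.Adj.reachable ?_))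
      rw [SimpleGraph.deleteEdges_adj]
      exact ⟨(ho1 w v how).symm, hne⟩
    rcases Sym2.eq_iff.1 he with ⟨rfl, rfl⟩ | ⟨rfl, rfl⟩
    · exact hyx how
    · exact hbr hv
  have hout := (balanced_cut f hbal S).trans hin
  rw [Finset.sum_eq_zero_iff] at hout
  exact Finset.sum_eq_zero_iff.1 (hout x ((hS x).2 (SimpleGraph.Reachable.refl x))) y
    (Finset.mem_compl.2 fun h => hbr ((hS y).1 h))

/-- If the cell vertices `i < i'` agree, the outflow and inflow of the levels `i ≤ j < i'`
agree at every vertex. -/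
theorem levels_balanced {V : Type*} [Fintype V] {k : ℕ} (a : V → ℕ)
    (r : Fin k → V → V → ℕ) (i i' : Fin (k + 1)) (hlt : i < i')
    (h : cellVertex a r i = cellVertex a r i') (v : V) :
    ∑ w, ∑ j with i.val ≤ j.val ∧ j.val < i'.val, r j v w =
      ∑ w, ∑ j with i.val ≤ j.val ∧ j.val < i'.val, r j w v := by
  have hlt' : i.val < i'.val := hlt
  have hv := congrFun h v
  simp only [cellVertex] at hv
  rw [Finset.sum_comm, Finset.sum_comm (s := Finset.univ) (f := fun w j => r j w v)]
  have h1 (g : Fin k → ℕ) : ∑ j with j.val < i'.val, g j = (∑ j with j.val < i.val, g j) +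
      ∑ j with i.val ≤ j.val ∧ j.val < i'.val, g j := by
    simp only [Finset.sum_filter, ← Finset.sum_add_distrib]
    refine Finset.sum_congr rfl fun j _ => ?_
    split_ifs <;> omega
  have h2 (g : Fin k → ℕ) : ∑ j with i.val ≤ j.val, g j = (∑ j with i'.val ≤ j.val, g j) +
      ∑ j with i.val ≤ j.val ∧ j.val < i'.val, g j := by
    simp only [Finset.sum_filter, ← Finset.sum_add_distrib]
    refine Finset.sum_congr rfl fun j _ => ?_
    split_ifs <;> omega
  rw [h1, h2] at hv
  omega

/-- On an oriented tree, the `k+1` vertices of any `k`-cell `(a, r)` (with `r`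
supported on the orientation and every level of `r` nonzero) are pairwise
distinct. -/
theorem tree_cell_vertices_distinct {V : Type*} [Fintype V]
    (G : SimpleGraph V) (hG : G.IsTree)
    (o : V → V → Prop)
    (ho1 : ∀ v w, o v w → G.Adj v w)
    (ho2 : ∀ v w, G.Adj v w → Xor' (o v w) (o w v))
    (k : ℕ) (hk : 1 ≤ k)
    (a : V → ℕ) (r : Fin k → V → V → ℕ)
    (hsupp : ∀ (j : Fin k) (v w : V), ¬ o v w → r j v w = 0)
    (hpos : ∀ j : Fin k, 0 < ∑ v : V, ∑ w : V, r j v w) :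
    Function.Injective (cellVertex a r) := by
  -- It suffices to separate vertices with indices `i < i'`.
  have key : ∀ i i' : Fin (k + 1), i < i' → cellVertex a r i ≠ cellVertex a r i' := by
    intro i i' hlt h
    have hlt' : i.val < i'.val := hlt
    have hbal := levels_balanced a r i i' hlt h
    have hsum : ∀ v w, ¬ o v w → ∑ j with i.val ≤ j.val ∧ j.val < i'.val, r j v w = 0 :=
      fun v w hvw => Finset.sum_eq_zero fun j _ => hsupp j v w hvw
    have hzero := balanced_flow_eq_zero G hG.isAcyclic o ho1 ho2 _ hsum hbal
    let j : Fin k := ⟨i.val, by omega⟩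
    refine (hpos j).ne' (Finset.sum_eq_zero fun v _ => Finset.sum_eq_zero fun w _ => ?_)
    exact Finset.sum_eq_zero_iff.1 (hzero v w) j (by simp [j, hlt'])
  intro i i' h
  rcases lt_trichotomy i i' with hl | he | hl
  · exact absurd h (key i i' hl)
  · exact he
  · exact absurd h.symm (key i' i hl)
end

section
/- Let V be a finite type and G a simple graph on V which is a tree (connected and acyclic), equipped with an orientation o. Let k ≥ 1 and let (a, r) and (a', r') be two k-cells (a, a' : V → ℕ; r, r' : Fin k → V → V → ℕ supported on o with every level nonzero). Fix i with 0 ≤ i ≤ k and suppose that the i-th facets agree, d_i(a, r) = d_i(a', r'), and that the opposite vertices agree, c_i(a, r) = c_i(a', r'). Then a = a' and r = r'. Here the i-th facet d_i(a, r) = (b, s) is the (k−1)-cell given by: for i = 0, b v = a v + ∑_{w} r_1 v w and s = (r_2, …, r_k); for 0 < i < k, b = a and s = (r_1, …, r_i + r_{i+1}, …, r_k); for i = k, b v = a v + ∑_{w} r_k w v and s = (r_1, …, r_{k−1}). -/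
/-- The `i`-th facet `d_i(a, r)` of a `k`-cell `(a, r)`, a `(k-1)`-cell:
for `i = 0`, `b v = a v + ∑_w r 0 v w` and `s = (r 1, …, r (k-1))`;
for `0 < i < k`, `b = a` and `s = (r 0, …, r (i-1) + r i, …, r (k-1))`;
for `i = k`, `b v = a v + ∑_w r (k-1) w v` and `s = (r 0, …, r (k-2))`
(here `r` is `0`-indexed, corresponding to the paper's levels `1, …, k`). -/
def dFacet {V : Type*} [Fintype V] {k : ℕ} (hk : 0 < k) (a : V → ℕ)
    (r : Fin k → V → V → ℕ) (i : Fin (k + 1)) :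
    (V → ℕ) × (Fin (k - 1) → V → V → ℕ) :=
  (fun v =>
      if (i : ℕ) = 0 then a v + ∑ w : V, r ⟨0, hk⟩ v w
      else if (i : ℕ) = k then a v + ∑ w : V, r ⟨k - 1, by omega⟩ w v
      else a v,
   fun l v w =>
      if (l : ℕ) + 1 < (i : ℕ) then r ⟨(l : ℕ), by have := l.isLt; omega⟩ v w
      else if (l : ℕ) + 1 = (i : ℕ) then
        r ⟨(l : ℕ), by have := l.isLt; omega⟩ v w
          + r ⟨(l : ℕ) + 1, by have := l.isLt; omega⟩ v w
      else r ⟨(l : ℕ) + 1, by have := l.isLt; omega⟩ v w)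

/-- An antisymmetric flow on the edges of a finite acyclic graph which is conserved at every vertex
vanishes. -/
theorem antisymm_flow_eq_zero {V : Type*} [Fintype V] (G : SimpleGraph V) (hG : G.IsAcyclic)
    (f : V → V → ℤ) (hanti : ∀ v w, f v w = - f w v) (hadj : ∀ v w, ¬ G.Adj v w → f v w = 0)
    (hdiv : ∀ v, ∑ w, f v w = 0) (v w : V) : f v w = 0 := by
  classical
  by_cases h : G.Adj v w
  swap
  · exact hadj v w h
  have hb := SimpleGraph.isAcyclic_iff_forall_adj_isBridge.1 hG h
  rw [SimpleGraph.isBridge_iff] at hb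
  -- `S` is the side of `v` after removal of the bridge `vw`.
  set H := G.deleteEdges {s(v, w)} with hH
  let S : Finset V := Finset.univ.filter fun x => H.Reachable v x
  have hvS : v ∈ S := by simp [S]
  have hwS : w ∈ Sᶜ := by simpa [S] using hb
  have h0 : ∑ x ∈ S, ∑ y, f x y = 0 := Finset.sum_eq_zero fun x _ => hdiv x
  have h1 : ∑ x ∈ S, ∑ y ∈ S, f x y = 0 := by
    have h2 : ∑ x ∈ S, ∑ y ∈ S, f x y = - ∑ x ∈ S, ∑ y ∈ S, f x y := by
      conv_lhs => rw [Finset.sum_comm]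
      simp only [← Finset.sum_neg_distrib]
      exact Finset.sum_congr rfl fun x _ => Finset.sum_congr rfl fun y _ => hanti y x
    linarith
  have hcross : ∀ x ∈ S, ∀ y ∈ Sᶜ, ¬ (x = v ∧ y = w) → f x y = 0 := by
    intro x hx y hy hne
    simp only [S, Finset.mem_compl, Finset.mem_filter, Finset.mem_univ, true_and] at hx hy
    apply hadj
    intro hxy
    by_cases he : s(x, y) = s(v, w)
    · rcases Sym2.eq_iff.1 he with h' | ⟨rfl, rfl⟩
      · exact hne h'
      · exact hb hx
    · refine hy (hx.trans (SimpleGraph.Adj.reachable ?_))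
      rw [hH, SimpleGraph.deleteEdges_adj]
      exact ⟨hxy, he⟩
  have h3 : ∑ x ∈ S, ∑ y ∈ Sᶜ, f x y = f v w := by
    rw [Finset.sum_eq_single_of_mem v hvS, Finset.sum_eq_single_of_mem w hwS]
    · exact fun y hy hne => hcross v hvS y hy fun h => hne h.2
    · exact fun x hx hne => Finset.sum_eq_zero fun y hy => hcross x hx y hy fun h => hne h.1
  simp only [← Finset.sum_add_sum_compl S, Finset.sum_add_distrib] at h0
  linarith

/-- On an oriented finite forest, a weight on the oriented edges is determined by its divergence
(the equality of divergences is written without subtraction). -/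
theorem eq_of_div_eq {V : Type*} [Fintype V] (G : SimpleGraph V) (hG : G.IsAcyclic)
    (o : V → V → Prop) (ho1 : ∀ v w, o v w → G.Adj v w)
    (ho2 : ∀ v w, G.Adj v w → Xor' (o v w) (o w v))
    (p p' : V → V → ℕ) (hp : ∀ v w, ¬ o v w → p v w = 0) (hp' : ∀ v w, ¬ o v w → p' v w = 0)
    (hdiv : ∀ v, ∑ w, p v w + ∑ w, p' w v = ∑ w, p' v w + ∑ w, p w v) : p = p' := by
  have key := antisymm_flow_eq_zero G hG
    (fun v w => ((p v w : ℤ) - p' v w) - ((p w v : ℤ) - p' w v))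
    (fun v w => by ring)
    (fun v w h => by
      have h1 : ¬ o v w := fun h' => h (ho1 _ _ h')
      have h2 : ¬ o w v := fun h' => h (ho1 _ _ h').symm
      simp [hp _ _ h1, hp _ _ h2, hp' _ _ h1, hp' _ _ h2])
    (fun v => by
      have h := hdiv v
      zify at h
      simp only [Finset.sum_sub_distrib]
      linarith)
  funext v w
  by_cases h : o v w
  · have h2 : ¬ o w v := by
      rcases ho2 v w (ho1 v w h) with h' | h'
      · exact h'.2
      · exact absurd h h'.2
    have hk := key v w
    simp only [hp _ _ h2, hp' _ _ h2] at hk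
    omega
  · rw [hp _ _ h, hp' _ _ h]

/-- Two sums agreeing off one index differ as their terms at that index do. -/
theorem sum_add_eq_sum_add_of_eq_off {ι : Type*} (F : Finset ι) (x x' : ι → ℕ)
    (j : ι) (hj : j ∈ F) (h : ∀ l ∈ F, l ≠ j → x l = x' l) :
    ∑ l ∈ F, x l + x' j = ∑ l ∈ F, x' l + x j := by
  classical
  rw [← Finset.add_sum_erase F x hj, ← Finset.add_sum_erase F x' hj,
    Finset.sum_congr rfl fun l hl => h l (Finset.mem_of_mem_erase hl) (Finset.ne_of_mem_erase hl)]
  ring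

/-- On an oriented tree, a `k`-cell is determined by any one of its facets
together with the opposite vertex. -/
theorem tree_cell_determined_by_facet_and_vertex {V : Type*} [Fintype V]
    (G : SimpleGraph V) (hG : G.IsTree)
    (o : V → V → Prop)
    (ho1 : ∀ v w, o v w → G.Adj v w)
    (ho2 : ∀ v w, G.Adj v w → Xor' (o v w) (o w v))
    (k : ℕ) (hk : 0 < k)
    (a a' : V → ℕ) (r r' : Fin k → V → V → ℕ)
    (hsupp : ∀ (j : Fin k) (v w : V), ¬ o v w → r j v w = 0)
    (hsupp' : ∀ (j : Fin k) (v w : V), ¬ o v w → r' j v w = 0)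
    (hpos : ∀ j : Fin k, 0 < ∑ v : V, ∑ w : V, r j v w)
    (hpos' : ∀ j : Fin k, 0 < ∑ v : V, ∑ w : V, r' j v w)
    (i : Fin (k + 1))
    (hfacet : dFacet hk a r i = dFacet hk a' r' i)
    (hvertex : cellVertex a r i = cellVertex a' r' i) :
    a = a' ∧ r = r' := by
  obtain ⟨hb, hs⟩ := Prod.ext_iff.1 hfacet
  have hlt : ∀ j : Fin k, (j : ℕ) + 1 < i → r j = r' j := by
    intro j hj
    funext v w
    have := congrFun (congrFun (congrFun hs ⟨j, by omega⟩) v) w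
    simpa [dFacet, hj] using this
  have hgt : ∀ j : Fin k, (i : ℕ) < j → r j = r' j := by
    intro j hj
    funext v w
    have := congrFun (congrFun (congrFun hs ⟨j - 1, by omega⟩) v) w
    have e : (j : ℕ) - 1 + 1 = j := by omega
    simpa [dFacet, e, hj.ne', hj.not_gt] using this
  have hdet := eq_of_div_eq G hG.isAcyclic o ho1 ho2
  by_cases hi0 : (i : ℕ) = 0
  · have hoff : ∀ j : Fin k, j ≠ ⟨0, hk⟩ → r j = r' j := fun j hj =>
      hgt j (by have : (j : ℕ) ≠ 0 := fun h => hj (Fin.ext h)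
                omega)
    have hB : ∀ v, a v + ∑ w, r ⟨0, hk⟩ v w = a' v + ∑ w, r' ⟨0, hk⟩ v w := fun v => by
      simpa [dFacet, hi0] using congrFun hb v
    have hC : ∀ v, a v + ∑ w, r ⟨0, hk⟩ w v = a' v + ∑ w, r' ⟨0, hk⟩ w v := fun v => by
      have h := congrFun hvertex v
      simp [cellVertex, hi0] at h
      have := sum_add_eq_sum_add_of_eq_off Finset.univ (fun j => ∑ w, r j w v)
        (fun j => ∑ w, r' j w v) ⟨0, hk⟩ (Finset.mem_univ _) (fun j _ hj => by simp [hoff j hj])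
      omega
    have h0 : r ⟨0, hk⟩ = r' ⟨0, hk⟩ := hdet _ _ (hsupp _) (hsupp' _) fun v => by
      have := hB v
      have := hC v
      omega
    refine ⟨funext fun v => ?_, funext fun j => ?_⟩
    · have := hB v
      rw [h0] at this
      omega
    · by_cases hj : j = ⟨0, hk⟩
      · rw [hj, h0]
      · exact hoff j hj
  by_cases hik : (i : ℕ) = k
  · set m : Fin k := ⟨k - 1, by omega⟩ with hm
    have hoff : ∀ j : Fin k, j ≠ m → r j = r' j := fun j hj =>
      hlt j (by have : (j : ℕ) ≠ k - 1 := fun h => hj (Fin.ext h)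
                omega)
    have hB : ∀ v, a v + ∑ w, r m w v = a' v + ∑ w, r' m w v := fun v => by
      simpa [dFacet, hik, hk.ne'] using congrFun hb v
    have hC : ∀ v, a v + ∑ w, r m v w = a' v + ∑ w, r' m v w := fun v => by
      have h := congrFun hvertex v
      simp [cellVertex, hik, Finset.filter_false_of_mem] at h
      have := sum_add_eq_sum_add_of_eq_off Finset.univ (fun j => ∑ w, r j v w)
        (fun j => ∑ w, r' j v w) m (Finset.mem_univ _) (fun j _ hj => by simp [hoff j hj])
      omega
    have h0 : r m = r' m := hdet _ _ (hsupp _) (hsupp' _) fun v => by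
      have := hB v
      have := hC v
      omega
    refine ⟨funext fun v => ?_, funext fun j => ?_⟩
    · have := hB v
      rw [h0] at this
      omega
    · by_cases hj : j = m
      · rw [hj, h0]
      · exact hoff j hj
  -- `p` and `q` are the two consecutive levels merged by the inner facet.
  · have hik' : (i : ℕ) < k := by omega
    set p : Fin k := ⟨i - 1, by omega⟩ with hp
    set q : Fin k := ⟨i, hik'⟩ with hq
    have ha : a = a' := by
      funext v
      simpa [dFacet, hi0, hik] using congrFun hb v
    have hsum : ∀ v w, r p v w + r q v w = r' p v w + r' q v w := fun v w => by
      have := congrFun (congrFun (congrFun hs ⟨i - 1, by omega⟩) v) w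
      have e : (i : ℕ) - 1 + 1 = i := by omega
      simpa [dFacet, e] using this
    have hC : ∀ v, ∑ w, r p v w + ∑ w, r q w v = ∑ w, r' p v w + ∑ w, r' q w v := fun v => by
      have h := congrFun hvertex v
      simp only [cellVertex, ha] at h
      have h1 := sum_add_eq_sum_add_of_eq_off (Finset.univ.filter fun j : Fin k => (j : ℕ) < i)
        (fun j => ∑ w, r j v w) (fun j => ∑ w, r' j v w) p
        (Finset.mem_filter.2 ⟨Finset.mem_univ _, Nat.sub_lt (by omega) one_pos⟩) (fun j hj hne => by
          have h1 : (j : ℕ) ≠ i - 1 := fun h => hne (Fin.ext h)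
          have h2 : (j : ℕ) < i := by simpa using hj
          simp [hlt j (by omega)])
      have h2 := sum_add_eq_sum_add_of_eq_off (Finset.univ.filter fun j : Fin k => (i : ℕ) ≤ j)
        (fun j => ∑ w, r j w v) (fun j => ∑ w, r' j w v) q
        (by simp [hq]) (fun j hj hne => by
          have h1 : (j : ℕ) ≠ i := fun h => hne (Fin.ext h)
          have h2 : (i : ℕ) ≤ j := by simpa using hj
          simp [hgt j (by omega)])
      omega
    have h0 : r p = r' p := hdet _ _ (hsupp _) (hsupp' _) fun v => by
      have h1 := hC v
      have h2 : ∑ w, r p w v + ∑ w, r q w v = ∑ w, r' p w v + ∑ w, r' q w v := by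
        simp only [← Finset.sum_add_distrib, hsum]
      omega
    refine ⟨ha, funext fun j => ?_⟩
    rcases lt_trichotomy (j : ℕ) i with hj | hj | hj
    · by_cases hjp : (j : ℕ) = i - 1
      · rw [show j = p from Fin.ext hjp, h0]
      · exact hlt j (by omega)
    · rw [show j = q from Fin.ext hj]
      funext v w
      have := hsum v w
      rw [h0] at this
      omega
    · exact hgt j hj
end

section
/- Let V be a finite type and G a connected simple graph on V equipped with an orientation o. Then the following are equivalent: (1) G is acyclic (i.e., G is a tree); (2) for every n ≥ 1 and every k ≥ 1, every k-cell (a, r) with ∑_v a v + ∑_{j,v,w} r j v w = n has pairwise distinct vertices c_0, …, c_k, and any two such k-cells whose sets of vertices {c_0, …, c_k} coincide are equal. -/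
/-- `(a, r)` is a `k`-cell of the `n`-th symmetric product of the graph
oriented by `o`: `r` is supported on the orientation, every level of `r` is
nonzero, and the total weight is `n`. -/
def IsCell {V : Type*} [Fintype V] (o : V → V → Prop) (n k : ℕ)
    (a : V → ℕ) (r : Fin k → V → V → ℕ) : Prop :=
  (∀ (j : Fin k) (v w : V), ¬ o v w → r j v w = 0) ∧
  (∀ j : Fin k, 0 < ∑ v : V, ∑ w : V, r j v w) ∧
  ((∑ v : V, a v) + ∑ j : Fin k, ∑ v : V, ∑ w : V, r j v w = n)

/-! ### Divergence of flows on a graph -/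

/-- Outflow minus inflow at `v` of an integer function on ordered pairs of vertices. -/
def flowDiv {V : Type*} [Fintype V] (z : V → V → ℤ) (v : V) : ℤ :=
  ∑ w, (z v w - z w v)

/-- `FlowLT o x y` says that `y - x` is the divergence of a nonzero nonnegative integer flow
supported on the orientation `o`. -/
def FlowLT {V : Type*} [Fintype V] (o : V → V → Prop) (x y : V → ℕ) : Prop :=
  ∃ f : V → V → ℕ, (∀ v w, ¬ o v w → f v w = 0) ∧ (∃ v w, f v w ≠ 0) ∧
    ∀ v, (y v : ℤ) - x v = flowDiv (fun v w => (f v w : ℤ)) v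

/-- Summation by parts on a graph. -/
lemma sum_mul_flowDiv {V : Type*} [Fintype V] (f : V → ℤ) (z : V → V → ℤ) :
    ∑ v, f v * flowDiv z v = ∑ v, ∑ w, (f v - f w) * z v w := by
  simp only [flowDiv, Finset.mul_sum, mul_sub, sub_mul, Finset.sum_sub_distrib]
  congr 1
  exact Finset.sum_comm

lemma flowDiv_add {V : Type*} [Fintype V] (z z' : V → V → ℤ) (v : V) :
    flowDiv (fun x y => z x y + z' x y) v = flowDiv z v + flowDiv z' v := by
  simp only [flowDiv, ← Finset.sum_add_distrib]
  exact Finset.sum_congr rfl fun _ _ => by ring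

lemma flowDiv_sub {V : Type*} [Fintype V] (z z' : V → V → ℤ) (v : V) :
    flowDiv (fun x y => z x y - z' x y) v = flowDiv z v - flowDiv z' v := by
  simp only [flowDiv, ← Finset.sum_sub_distrib]
  exact Finset.sum_congr rfl fun _ _ => by ring

/-- On an acyclic graph, a flow without divergence vanishes: the flow through a bridge is the total
divergence on one side of it. -/
lemma flow_eq_zero {V : Type*} [Fintype V] {G : SimpleGraph V} {o : V → V → Prop}
    (ho1 : ∀ v w, o v w → G.Adj v w) (ho2 : ∀ v w, G.Adj v w → Xor' (o v w) (o w v))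
    (hG : G.IsAcyclic) (z : V → V → ℤ) (hz : ∀ v w, ¬ o v w → z v w = 0)
    (hdiv : ∀ v, flowDiv z v = 0) (v w : V) : z v w = 0 := by
  classical
  by_cases hvw : o v w
  swap
  · exact hz v w hvw
  have hadj := ho1 v w hvw
  have hbr := SimpleGraph.isAcyclic_iff_forall_adj_isBridge.1 hG hadj
  rw [SimpleGraph.isBridge_iff] at hbr
  set H := G \ SimpleGraph.fromEdgeSet {s(v, w)} with hH
  -- the indicator of the side of `v` of the bridge
  let f : V → ℤ := fun x => if H.Reachable v x then 1 else 0
  have h := sum_mul_flowDiv f z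
  simp only [hdiv, mul_zero, Finset.sum_const_zero] at h
  rw [Finset.sum_eq_single v, Finset.sum_eq_single w] at h
  · have h1 : f v = 1 := if_pos (SimpleGraph.Reachable.refl v)
    have h2 : f w = 0 := if_neg (by tauto)
    simpa [h1, h2] using h.symm
  -- only the term at `(v, w)` survives, as `f` is constant along every other edge
  all_goals try simp
  all_goals
    have key : ∀ x y, (x ≠ v ∨ y ≠ w) → (f x - f y) * z x y = 0 := by
      intro x y hxy
      by_cases hoxy : o x y
      swap
      · rw [hz x y hoxy, mul_zero]
      have hA : H.Adj x y := by
        have hne := (ho1 x y hoxy).ne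
        rw [hH, SimpleGraph.sdiff_adj, SimpleGraph.fromEdgeSet_adj]
        refine ⟨ho1 x y hoxy, fun hc => ?_⟩
        have := hc.1
        simp only [Set.mem_singleton_iff, Sym2.eq_iff] at this
        rcases this with ⟨rfl, rfl⟩ | ⟨rfl, rfl⟩
        · simp at hxy
        · rcases ho2 _ _ hadj with h' | h'
          · exact h'.2 hoxy
          · exact h'.2 hvw
      have : f x = f y := by
        have hiff : H.Reachable v x ↔ H.Reachable v y :=
          ⟨fun h => h.trans hA.reachable, fun h => h.trans hA.symm.reachable⟩
        simp only [f, hiff]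
      rw [this, sub_self, zero_mul]
  · intro y hy
    simpa using key v y (Or.inr hy)
  · intro x hx
    exact Finset.sum_eq_zero fun y _ => key x y (Or.inl hx)

/-- On an acyclic graph, a nonnegative flow is determined by its divergence. -/
lemma flow_unique {V : Type*} [Fintype V] {G : SimpleGraph V} {o : V → V → Prop}
    (ho1 : ∀ v w, o v w → G.Adj v w) (ho2 : ∀ v w, G.Adj v w → Xor' (o v w) (o w v))
    (hG : G.IsAcyclic) (f g : V → V → ℕ) (hf : ∀ v w, ¬ o v w → f v w = 0)
    (hg : ∀ v w, ¬ o v w → g v w = 0)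
    (hdiv : ∀ v, flowDiv (fun v w => (f v w : ℤ)) v = flowDiv (fun v w => (g v w : ℤ)) v) :
    f = g := by
  funext v w
  have := flow_eq_zero ho1 ho2 hG (fun v w => (f v w : ℤ) - g v w)
    (fun v w h => by simp [hf v w h, hg v w h])
    (fun v => by rw [flowDiv_sub, hdiv, sub_self]) v w
  omega

/-! ### The strict order on vertices, and cells as chains -/

lemma FlowLT.trans {V : Type*} [Fintype V] {o : V → V → Prop} {x y z : V → ℕ}
    (h : FlowLT o x y) (h' : FlowLT o y z) : FlowLT o x z := by
  obtain ⟨f, hf, ⟨v, w, hvw⟩, hfd⟩ := h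
  obtain ⟨g, hg, -, hgd⟩ := h'
  refine ⟨fun v w => f v w + g v w, fun v w hn => by simp [hf v w hn, hg v w hn],
    ⟨v, w, by simp [hvw]⟩, fun v => ?_⟩
  push_cast
  rw [flowDiv_add, ← hfd, ← hgd]
  ring

lemma FlowLT.irrefl {V : Type*} [Fintype V] {G : SimpleGraph V} {o : V → V → Prop}
    (ho1 : ∀ v w, o v w → G.Adj v w) (ho2 : ∀ v w, G.Adj v w → Xor' (o v w) (o w v))
    (hG : G.IsAcyclic) (x : V → ℕ) : ¬ FlowLT o x x := by
  rintro ⟨f, hf, ⟨v, w, hvw⟩, hd⟩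
  have := flow_eq_zero ho1 ho2 hG (fun v w => (f v w : ℤ)) (fun v w h => by simp [hf v w h])
    (fun v => by rw [← hd, sub_self]) v w
  exact hvw (by exact_mod_cast this)

/-- From one vertex of a cell to the next, the level `i` switches from inflow to outflow. -/
lemma cellVertex_succ_sub {V : Type*} [Fintype V] {k : ℕ} (a : V → ℕ)
    (r : Fin k → V → V → ℕ) (i : Fin k) (v : V) :
    (cellVertex a r i.succ v : ℤ) - cellVertex a r i.castSucc v
      = flowDiv (fun v w => (r i v w : ℤ)) v := by
  simp only [cellVertex, flowDiv, Finset.sum_filter, Fin.val_succ, Fin.val_castSucc]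
  push_cast
  rw [add_assoc, add_assoc, add_sub_add_left_eq_sub, ← Finset.sum_add_distrib,
    ← Finset.sum_add_distrib, ← Finset.sum_sub_distrib, Finset.sum_eq_single i]
  · simp
  · intro j _ hj
    have hj' : (j : ℕ) ≠ i := fun h => hj (Fin.ext h)
    by_cases h : (j : ℕ) < i
    · simp [h, show (j : ℕ) < i + 1 by omega, show ¬ (i : ℕ) + 1 ≤ j by omega,
        show ¬ (i : ℕ) ≤ j by omega]
    · simp [h, show ¬ (j : ℕ) < i + 1 by omega, show (i : ℕ) + 1 ≤ j by omega,
        show (i : ℕ) ≤ j by omega]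
  · simp

/-- The vertices of a cell form a chain for `FlowLT`. -/
lemma IsCell.flowLT {V : Type*} [Fintype V] {o : V → V → Prop} {n k : ℕ} {a : V → ℕ}
    {r : Fin k → V → V → ℕ} (h : IsCell o n k a r) {i j : Fin (k + 1)} (hij : i < j) :
    FlowLT o (cellVertex a r i) (cellVertex a r j) := by
  have : IsTrans (V → ℕ) (FlowLT o) := ⟨fun _ _ _ => FlowLT.trans⟩
  refine (Fin.liftFun_iff_succ (FlowLT o)).2 (fun i => ?_) hij
  refine ⟨r i, h.1 i, ?_, cellVertex_succ_sub a r i⟩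
  by_contra! hc
  have := h.2.1 i
  simp [hc] at this

/-- Two chains of the same length for a strict order which have the same elements are equal. -/
lemma chain_eq_of_range_eq {α : Type*} {R : α → α → Prop} (hirr : ∀ x, ¬ R x x)
    (htr : ∀ {x y z}, R x y → R y z → R x z) {m : ℕ} {c d : Fin m → α}
    (hc : ∀ {i j}, i < j → R (c i) (c j)) (hd : ∀ {i j}, i < j → R (d i) (d j))
    (h : Set.range c = Set.range d) : c = d := by
  have hcinj : ∀ i j, c i = c j → i = j := by
    intro i j hij
    rcases lt_trichotomy i j with hl | hl | hl
    · exact absurd (hij ▸ hc hl) (hirr _)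
    · exact hl
    · exact absurd (hij ▸ hc hl) (hirr _)
  have hex : ∀ i, ∃ j, c j = d i := fun i => by
    have : d i ∈ Set.range c := h ▸ Set.mem_range_self i
    exact this
  choose σ hσ using hex
  have hmono : StrictMono σ := by
    intro i j hij
    have h1 := hd hij
    rw [← hσ, ← hσ] at h1
    by_contra hn
    rcases (not_lt.1 hn).eq_or_lt with hl | hl
    · rw [hl] at h1
      exact hirr _ h1
    · exact hirr _ (htr h1 (hc hl))
  have hid : σ = id := by
    have : OrderIso.refl _ = StrictMono.orderIsoOfSurjective σ hmono
      (Finite.surjective_of_injective hmono.injective) := Subsingleton.elim _ _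
    funext i
    exact (congrArg (fun e => e i) this).symm
  funext i
  simpa [hid] using hσ i

/-! ### Circulations in a graph with a cycle -/

/-- A unit of flow may be sent along any walk, using only the edges of the graph of the walk. -/
lemma exists_flow_of_walk {V : Type*} [Fintype V] [DecidableEq V] {H : SimpleGraph V}
    {o : V → V → Prop} (ho2 : ∀ v w, H.Adj v w → Xor' (o v w) (o w v)) {x y : V}
    (p : H.Walk x y) :
    ∃ z : V → V → ℤ, (∀ v w, ¬ (o v w ∧ H.Adj v w) → z v w = 0) ∧
      ∀ v, flowDiv z v = (if v = x then 1 else 0) - (if v = y then 1 else 0) := by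
  induction p with
  | nil => exact ⟨fun _ _ => 0, fun _ _ _ => rfl, fun v => by simp [flowDiv]⟩
  | @cons x u y hadj p ih =>
    obtain ⟨z, hz, hd⟩ := ih
    rcases ho2 _ _ hadj with h | h
    · refine ⟨fun v w => z v w + if v = x ∧ w = u then 1 else 0, fun v w hn => ?_, fun v => ?_⟩
      · have : ¬ (v = x ∧ w = u) := by
          rintro ⟨rfl, rfl⟩
          exact hn ⟨h.1, hadj⟩
        simp [hz v w hn, this]
      · rw [flowDiv_add, hd]
        simp only [flowDiv, Finset.sum_sub_distrib, ite_and]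
        by_cases h1 : v = x <;> by_cases h2 : v = u <;> simp [h1, h2]
    · refine ⟨fun v w => z v w - if v = u ∧ w = x then 1 else 0, fun v w hn => ?_, fun v => ?_⟩
      · have : ¬ (v = u ∧ w = x) := by
          rintro ⟨rfl, rfl⟩
          exact hn ⟨h.1, hadj.symm⟩
        simp [hz v w hn, this]
      · rw [flowDiv_sub, hd]
        simp only [flowDiv, Finset.sum_sub_distrib, ite_and]
        by_cases h1 : v = x <;> by_cases h2 : v = u <;> simp [h1, h2]

/-- A graph with a cycle carries a nonzero flow without divergence: close up, by an edge that is
not a bridge, the unit flow along a walk avoiding that edge. -/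
lemma exists_circulation {V : Type*} [Fintype V] {G : SimpleGraph V} {o : V → V → Prop}
    (ho1 : ∀ v w, o v w → G.Adj v w) (ho2 : ∀ v w, G.Adj v w → Xor' (o v w) (o w v))
    (hG : ¬ G.IsAcyclic) :
    ∃ z : V → V → ℤ, (∀ v w, ¬ o v w → z v w = 0) ∧ (∃ v w, z v w ≠ 0) ∧
      ∀ v, flowDiv z v = 0 := by
  classical
  -- an edge that is not a bridge, named so that it is oriented from `x` to `y`
  obtain ⟨x, y, hxy, hbr⟩ : ∃ x y, o x y ∧ ¬ G.IsBridge s(x, y) := by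
    rw [SimpleGraph.isAcyclic_iff_forall_adj_isBridge] at hG
    push Not at hG
    obtain ⟨x, y, hadj, hb⟩ := hG
    rcases ho2 _ _ hadj with h | h
    · exact ⟨x, y, h.1, hb⟩
    · exact ⟨y, x, h.1, by rwa [Sym2.eq_swap]⟩
  have hadj := ho1 _ _ hxy
  rw [SimpleGraph.isBridge_iff] at hbr
  have hreach : (G \ SimpleGraph.fromEdgeSet {s(x, y)}).Reachable x y := by tauto
  obtain ⟨p⟩ := hreach.symm
  obtain ⟨z, hz, hd⟩ := exists_flow_of_walk (o := o)
    (fun v w h => ho2 v w (SimpleGraph.sdiff_adj _ _ _ _ |>.1 h).1) p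
  refine ⟨fun v w => z v w + if v = x ∧ w = y then 1 else 0, fun v w hn => ?_, ⟨x, y, ?_⟩,
    fun v => ?_⟩
  · have : ¬ (v = x ∧ w = y) := by
      rintro ⟨rfl, rfl⟩
      exact hn hxy
    simp [hz v w (fun h => hn h.1), this]
  · have : z x y = 0 := hz x y (by simp [hadj.ne])
    simp [this]
  · rw [flowDiv_add, hd]
    simp only [flowDiv, Finset.sum_sub_distrib, ite_and]
    by_cases h1 : v = x <;> by_cases h2 : v = y <;> simp [h1, h2]

/-! ### The characterization of trees -/

/-- A connected oriented graph is a tree (acyclic) if and only if, for every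
`n ≥ 1` and `k ≥ 1`, every `k`-cell of the `n`-th symmetric product has
pairwise distinct vertices, and any two such `k`-cells with the same set of
vertices coincide. -/
theorem symmetricProduct_simplicial_iff_tree {V : Type*} [Fintype V]
    (G : SimpleGraph V) (hconn : G.Connected)
    (o : V → V → Prop)
    (ho1 : ∀ v w, o v w → G.Adj v w)
    (ho2 : ∀ v w, G.Adj v w → Xor' (o v w) (o w v)) :
    G.IsAcyclic ↔
      ∀ n, 1 ≤ n → ∀ k, 1 ≤ k →
        (∀ (a : V → ℕ) (r : Fin k → V → V → ℕ), IsCell o n k a r →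
          Function.Injective (cellVertex a r)) ∧
        (∀ (a a' : V → ℕ) (r r' : Fin k → V → V → ℕ),
          IsCell o n k a r → IsCell o n k a' r' →
          Set.range (cellVertex a r) = Set.range (cellVertex a' r') →
          a = a' ∧ r = r') := by
  constructor
  · intro hG n _ k _
    have hirr := FlowLT.irrefl ho1 ho2 hG
    refine ⟨fun a r h i j hij => ?_, fun a a' r r' h h' hrange => ?_⟩
    · rcases lt_trichotomy i j with hl | hl | hl
      · exact absurd (hij ▸ h.flowLT hl) (hirr _)
      · exact hl
      · exact absurd (hij ▸ h.flowLT hl) (hirr _)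
    · have hc : cellVertex a r = cellVertex a' r' :=
        chain_eq_of_range_eq hirr FlowLT.trans h.flowLT h'.flowLT hrange
      have hr : r = r' := by
        funext j
        refine flow_unique ho1 ho2 hG _ _ (h.1 j) (h'.1 j) fun v => ?_
        rw [← cellVertex_succ_sub a, ← cellVertex_succ_sub a', hc]
      subst hr
      refine ⟨?_, rfl⟩
      funext v
      have := congrFun (congrFun hc 0) v
      simpa [cellVertex] using this
  · intro h
    by_contra hG
    obtain ⟨z, hz, ⟨x, y, hxy⟩, hd⟩ := exists_circulation ho1 ho2 hG
    let p : V → V → ℕ := fun v w => (2 * |z v w| + z v w).toNat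
    let q : V → V → ℕ := fun v w => (2 * |z v w|).toNat
    have hpz : ∀ v w, (p v w : ℤ) = 2 * |z v w| + z v w := fun v w => by
      have := neg_abs_le (z v w)
      have := abs_nonneg (z v w)
      exact Int.toNat_of_nonneg (by linarith)
    have hqz : ∀ v w, (q v w : ℤ) = 2 * |z v w| := fun v w =>
      Int.toNat_of_nonneg (by positivity)
    have hp0 : ∀ v w, ¬ o v w → p v w = 0 := fun v w hn => by simp [p, hz v w hn]
    have hq0 : ∀ v w, ¬ o v w → q v w = 0 := fun v w hn => by simp [q, hz v w hn]
    have hpos : ∀ f : V → V → ℕ, 0 < f x y → 0 < ∑ v, ∑ w, f v w := fun f hf =>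
      hf.trans_le ((Finset.single_le_sum (f := fun w => f x w) (fun _ _ => Nat.zero_le _)
        (Finset.mem_univ y)).trans (Finset.single_le_sum (f := fun v => ∑ w, f v w)
        (fun _ _ => Nat.zero_le _) (Finset.mem_univ x)))
    have habs := abs_pos.2 hxy
    have hpp : 0 < ∑ v, ∑ w, p v w := hpos p (by
      have := neg_abs_le (z x y)
      have := hpz x y
      omega)
    have hqp : 0 < ∑ v, ∑ w, q v w := hpos q (by have := hqz x y; omega)
    have hdiv : ∀ v, ∑ w, p v w + ∑ w, q w v = ∑ w, q v w + ∑ w, p w v := fun v => by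
      have h1 := hd v
      simp only [flowDiv, Finset.sum_sub_distrib] at h1
      zify
      simp only [hpz, hqz, Finset.sum_add_distrib]
      linarith
    have key := (h (∑ v, ∑ w, p v w + ∑ v, ∑ w, q v w) (by omega) 1 le_rfl).2
      (fun v => ∑ w, q w v) (fun v => ∑ w, p w v) (fun _ => p) (fun _ => q)
      ⟨fun _ => hp0, fun _ => hpp, by
        rw [Finset.sum_comm (f := fun v w => q w v)]; simp [add_comm]⟩
      ⟨fun _ => hq0, fun _ => hqp, by
        rw [Finset.sum_comm (f := fun v w => p w v)]; simp⟩
      (by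
        congr 1
        funext i v
        have := hdiv v
        fin_cases i
        · simp [cellVertex, add_comm]
        · simp [cellVertex]
          omega)
    have hpq : p x y = q x y := congrFun (congrFun (congrFun key.2 0) x) y
    have h1 := hpz x y
    have h2 := hqz x y
    omega
end

section
/- Let k be a field of characteristic 0, R a commutative k-algebra, H a finite group acting on R by k-algebra automorphisms, φ : R → k a k-algebra homomorphism, and t ∈ R an element with φ(t) ≠ 0. Then there exists an integer m ≥ 1 such that φ(∑_{h ∈ H} (h • t)^m) ≠ 0. -/
/-!
Put `a h = φ (h • t)`, a finite family of scalars with `a 1 = φ t ≠ 0`. If all power sums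
`∑ a h ^ m`, `m ≥ 1`, vanished, then by linearity `∑ a h * q (a h) = 0` for every polynomial `q`.
Taking for `q` the product of `X - b` over the values `b ≠ a 1` of `a`, only the terms with
`a h = a 1` survive, and the sum is the multiplicity of `a 1`, nonzero in characteristic zero,
times the nonzero scalar `a 1 * q (a 1)`.
-/

open Polynomial in
theorem exists_sum_pow_ne_zero {k ι : Type*} [Field k] [CharZero k] [Fintype ι]
    (a : ι → k) (i : ι) (hi : a i ≠ 0) : ∃ m : ℕ, 1 ≤ m ∧ ∑ j, a j ^ m ≠ 0 := by
  classical
  by_contra! hzero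
  have hpoly (q : k[X]) : ∑ j, a j * q.eval (a j) = 0 := by
    simp only [eval_eq_sum_range, Finset.mul_sum]
    rw [Finset.sum_comm]
    refine Finset.sum_eq_zero fun n _ => ?_
    calc ∑ j, a j * (q.coeff n * a j ^ n) = q.coeff n * ∑ j, a j ^ (n + 1) := by
          rw [Finset.mul_sum]
          exact Finset.sum_congr rfl fun j _ => by ring
      _ = 0 := by rw [hzero (n + 1) (by lia), mul_zero]
  let q : k[X] := ∏ b ∈ (Finset.univ.image a).erase (a i), (X - C b)
  have hqi : q.eval (a i) ≠ 0 := by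
    simp only [q, eval_prod, eval_sub, eval_X, eval_C]
    exact Finset.prod_ne_zero_iff.mpr fun b hb => sub_ne_zero.mpr (Finset.ne_of_mem_erase hb).symm
  have hterm (j : ι) : a j * q.eval (a j) = if a j = a i then a i * q.eval (a i) else 0 := by
    split_ifs with h
    · rw [h]
    · have hqj : q.eval (a j) = 0 := by
        simp only [q, eval_prod, eval_sub, eval_X, eval_C]
        exact Finset.prod_eq_zero (i := a j) (by simp [h]) (sub_self _)
      rw [hqj, mul_zero]
  have hsum := hpoly q
  rw [Finset.sum_congr rfl fun j _ => hterm j, ← Finset.sum_filter, Finset.sum_const, nsmul_eq_mul] at hsum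
  refine mul_ne_zero (Nat.cast_ne_zero.mpr ?_) (mul_ne_zero hi hqi) hsum
  exact Finset.card_ne_zero_of_mem (a := i) (by simp)

/-- Averaging step in the descent of semistability along finite quotients:
if a finite group `H` acts on a commutative `k`-algebra `R` by `k`-algebra
automorphisms (`k` of characteristic zero), `φ : R → k` is a `k`-algebra
homomorphism and `φ t ≠ 0`, then `φ (∑ h, (h • t) ^ m) ≠ 0` for some `m ≥ 1`. -/
theorem exists_pow_sum_smul_ne_zero {k : Type*} [Field k] [CharZero k]
    {R : Type*} [CommRing R] [Algebra k R]
    {H : Type*} [Group H] [Fintype H] [MulSemiringAction H R]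
    [SMulCommClass H k R]
    (φ : R →ₐ[k] k) (t : R) (ht : φ t ≠ 0) :
    ∃ m : ℕ, 1 ≤ m ∧ φ (∑ h : H, (h • t) ^ m) ≠ 0 := by
  obtain ⟨m, hm, h⟩ := exists_sum_pow_ne_zero (fun h : H => φ (h • t)) 1 (by simpa using ht)
  exact ⟨m, hm, by simpa only [map_sum, map_pow] using h⟩
end
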